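/- Let G = ⟨X | R⟩ be any finitely presented group and let M > 0 be the length of the longest defining relation in R. Then for all n ∈ ℕ, CL(n) ≤ n/2 + M·Ann(n). -/

import Mathlib

/-!
Write `G = ⟨X ∣ R⟩` and suppose `γ u γ⁻¹ v⁻¹` is freely equal to a product of `A` conjugates
`wᵢ ρᵢ wᵢ⁻¹` of relators or their inverses. Let `H = ⟨v⟩ ≤ G`. In the Schreier graph on `G ⧸ H`
(letters act by left multiplication) the word `v` labels a loop at `H`, the word `u` a loop at
`γ⁻¹H`, and `ρᵢ` a loop at `wᵢ⁻¹H`. A path from `H` to `γ⁻¹H` labelled `p` satisfies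
`p = γ⁻¹vᵏ` in `G` for some `k`, so `p⁻¹` conjugates `u` to `v`; it remains to find a short path.

Starting with the loop of `v`, adjoin relator loops that meet those already collected, as long as
possible (`exists_saturated`). Every vertex of the resulting set `S` is within
`|v|/2 + M·A` of `H`, since a loop of length `ℓ` has all its vertices within `ℓ/2` of its
base point. If the loop of `u` meets `S`, a path of length at most `|v|/2 + M·A + |u|/2` exists.

Otherwise `u` stays outside `S`, `v` stays inside, and each `ρᵢ` does one or the other. Let the
free group act on `(G ⧸ H) × G` by letting a letter act on both coordinates along edges that
start in `S`, and on the first coordinate only along the other edges (`cutPerm`). The loops of `u`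
and of all `ρᵢ` then act trivially on the fibres over their base points, whereas `v` sends `(H, 1)`
to `(H, v)`. Comparing both sides of the free equality gives `v = 1` in `G`
(`eq_one_of_separated`), and the empty word is a conjugator. This replaces the planar topology of
annular diagrams.
-/

namespace AnnDehn

/-- A word over the alphabet `X`: a list of letters together with exponents `±1`
(`true` = the letter itself, `false` = its inverse). -/
abbrev Word (X : Type*) := List (X × Bool)

/-- `IsProdOfConjRels R k g` : the free group element `g` is freely equal to a product
of `k` conjugates of relators in `R` or of their inverses. -/
def IsProdOfConjRels {X : Type*} (R : Set (FreeGroup X)) (k : ℕ) (g : FreeGroup X) : Prop :=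
  ∃ (w r : Fin k → FreeGroup X) (ε : Fin k → ℤ),
    (∀ i, r i ∈ R) ∧ (∀ i, ε i = 1 ∨ ε i = -1) ∧
      g = (List.ofFn (fun i => w i * (r i) ^ (ε i) * (w i)⁻¹)).prod

/-- The (combinatorial) area of a free group element with respect to the relators `R`:
the least number of conjugates of relators (or their inverses) whose product is freely
equal to `g`. -/
noncomputable def area {X : Type*} (R : Set (FreeGroup X)) (g : FreeGroup X) : ℕ :=
  sInf {k | IsProdOfConjRels R k g}

/-- The canonical projection from the free group onto the presented group `⟨X ∣ R⟩`. -/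
def proj {X : Type*} (R : Set (FreeGroup X)) : FreeGroup X →* PresentedGroup R :=
  PresentedGroup.mk R

/-- The Dehn function of the presentation `⟨X ∣ R⟩`:
`dehn R n = max {area w : |w| ≤ n, w = 1 in ⟨X ∣ R⟩}`. -/
noncomputable def dehn {X : Type*} (R : Set (FreeGroup X)) (n : ℕ) : ℕ :=
  sSup {A | ∃ w : Word X, w.length ≤ n ∧ proj R (FreeGroup.mk w) = 1 ∧
      A = area R (FreeGroup.mk w)}

/-- The conjugator length function of a group `G` marked by a map `φ` from a free group:
the least `N` such that any two words `u`, `v` of total length at most `n` representing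
conjugate elements of `G` admit a conjugating word of length at most `N`. -/
noncomputable def conjLength {X G : Type*} [Group G] (φ : FreeGroup X →* G) (n : ℕ) : ℕ :=
  sInf {N | ∀ u v : Word X, u.length + v.length ≤ n →
      IsConj (φ (FreeGroup.mk u)) (φ (FreeGroup.mk v)) →
      ∃ w : Word X, w.length ≤ N ∧
        φ (FreeGroup.mk w) * φ (FreeGroup.mk u) * (φ (FreeGroup.mk w))⁻¹ = φ (FreeGroup.mk v)}

/-- The conjugator length function of the presentation `⟨X ∣ R⟩`. -/
noncomputable def CL {X : Type*} (R : Set (FreeGroup X)) (n : ℕ) : ℕ :=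
  conjLength (proj R) n

/-- `annPair R u v` : the annular area of the pair `u`, `v`, i.e. the minimum of
`area (γ * u * γ⁻¹ * v⁻¹)` over all conjugators `γ` with `γuγ⁻¹ = v` in `⟨X ∣ R⟩`. -/
noncomputable def annPair {X : Type*} (R : Set (FreeGroup X)) (u v : FreeGroup X) : ℕ :=
  sInf {A | ∃ γ : FreeGroup X, proj R (γ * u * γ⁻¹) = proj R v ∧
      A = area R (γ * u * γ⁻¹ * v⁻¹)}

/-- The annular Dehn function of the presentation `⟨X ∣ R⟩`. -/
noncomputable def ann {X : Type*} (R : Set (FreeGroup X)) (n : ℕ) : ℕ :=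
  sSup {A | ∃ u v : Word X, u.length + v.length ≤ n ∧
      IsConj (proj R (FreeGroup.mk u)) (proj R (FreeGroup.mk v)) ∧
      A = annPair R (FreeGroup.mk u) (FreeGroup.mk v)}

/-- `f ≼ g` : there is a constant `C > 0` with `f n ≤ C * g (C*n + n) + C*n + C`
for all `n`. -/
def Dominates (f g : ℕ → ℕ) : Prop :=
  ∃ C : ℕ, 0 < C ∧ ∀ n, f n ≤ C * g (C * n + n) + C * n + C

/-- `f ≃ g` : `f ≼ g` and `g ≼ f`. -/
def Equivalent (f g : ℕ → ℕ) : Prop := Dominates f g ∧ Dominates g f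

/-! ### Paths in a Schreier graph -/

section Schreier

variable {X G Q : Type*} [Group G] [MulAction G Q]

/-- The vertices on the path labelled `L` that starts at `c`. Words act from the left, so the
path reads `L` from its last letter, and its vertices are the images of `c` under the suffixes
of `L`. -/
def pathVertices (φ : FreeGroup X →* G) (L : Word X) (c : Q) : Set Q :=
  {d | ∃ L' : Word X, L' <:+ L ∧ φ (FreeGroup.mk L') • c = d}

/-- Some word of length at most `N` labels a path from `c` to `d`. -/
def Reach (φ : FreeGroup X →* G) (N : ℕ) (c d : Q) : Prop :=
  ∃ L : Word X, L.length ≤ N ∧ φ (FreeGroup.mk L) • c = d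

lemma Reach.mono {φ : FreeGroup X →* G} {N N' : ℕ} {c d : Q} (h : Reach φ N c d)
    (hN : N ≤ N') : Reach φ N' c d := by
  obtain ⟨L, hL, h⟩ := h
  exact ⟨L, hL.trans hN, h⟩

lemma Reach.symm {φ : FreeGroup X →* G} {N : ℕ} {c d : Q} (h : Reach φ N c d) :
    Reach φ N d c := by
  obtain ⟨L, hL, rfl⟩ := h
  refine ⟨FreeGroup.invRev L, by simpa using hL, ?_⟩
  rw [← FreeGroup.inv_mk, map_inv, inv_smul_smul]

lemma Reach.trans {φ : FreeGroup X →* G} {N N' : ℕ} {c d e : Q} (h : Reach φ N c d)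
    (h' : Reach φ N' d e) : Reach φ (N + N') c e := by
  obtain ⟨L, hL, rfl⟩ := h
  obtain ⟨L', hL', rfl⟩ := h'
  refine ⟨L' ++ L, by simp; omega, ?_⟩
  rw [← FreeGroup.mul_mk, map_mul, mul_smul]

/-- A vertex on a loop can be reached from the base point in either direction, hence along at
most half of the loop. -/
lemma reach_of_mem_loop {φ : FreeGroup X →* G} {L : Word X} {c d : Q}
    (hL : φ (FreeGroup.mk L) • c = c) (hd : d ∈ pathVertices φ L c) :
    Reach φ (L.length / 2) c d := by
  obtain ⟨L₂, ⟨L₁, rfl⟩, rfl⟩ := hd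
  rw [← FreeGroup.mul_mk, map_mul, mul_smul] at hL
  by_cases h : L₂.length ≤ L₁.length
  · exact ⟨L₂, by simp; omega, rfl⟩
  · have h1 : Reach φ L₁.length (φ (FreeGroup.mk L₂) • c) c := ⟨L₁, le_rfl, hL⟩
    exact h1.symm.mono (by simp; omega)

/-! ### The action cut along a set of vertices -/

open Classical in
/-- The permutation of `Q × G` by which a generator `x` acts in the cut action: it moves the first
coordinate along the `x`-edge of the Schreier graph, and multiplies the second coordinate by `x`
when that edge starts in `S`. -/
noncomputable def cutPerm (φ : FreeGroup X →* G) (S : Set Q) (x : X) : Equiv.Perm (Q × G) where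
  toFun q := (φ (FreeGroup.of x) • q.1,
    if q.1 ∈ S then φ (FreeGroup.of x) * q.2 else q.2)
  invFun q := ((φ (FreeGroup.of x))⁻¹ • q.1,
    if (φ (FreeGroup.of x))⁻¹ • q.1 ∈ S then (φ (FreeGroup.of x))⁻¹ * q.2 else q.2)
  left_inv q := by
    rcases q with ⟨c, h⟩
    by_cases hc : c ∈ S <;> simp [hc]
  right_inv q := by
    rcases q with ⟨c, h⟩
    by_cases hc : (φ (FreeGroup.of x))⁻¹ • c ∈ S <;> simp [hc]

/-- The action of the free group on `Q × G` that extends `cutPerm`. -/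
noncomputable def cutAction (φ : FreeGroup X →* G) (S : Set Q) :
    FreeGroup X →* Equiv.Perm (Q × G) :=
  FreeGroup.lift (cutPerm φ S)

lemma mk_cons_true (x : X) (L : Word X) :
    FreeGroup.mk ((x, true) :: L) = FreeGroup.of x * FreeGroup.mk L := by
  rw [FreeGroup.of, FreeGroup.mul_mk]; rfl

lemma mk_cons_false (x : X) (L : Word X) :
    FreeGroup.mk ((x, false) :: L) = (FreeGroup.of x)⁻¹ * FreeGroup.mk L := by
  rw [FreeGroup.of, FreeGroup.inv_mk, FreeGroup.mul_mk]; rfl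

lemma cutAction_of (φ : FreeGroup X →* G) (S : Set Q) (x : X) :
    cutAction φ S (FreeGroup.of x) = cutPerm φ S x := by
  simp [cutAction]

lemma pathVertices_cons_subset {φ : FreeGroup X →* G} (a : X × Bool) (L : Word X) (c : Q) :
    pathVertices φ L c ⊆ pathVertices φ (a :: L) c := by
  rintro d ⟨L', h, rfl⟩
  exact ⟨L', h.trans (List.suffix_cons a L), rfl⟩

lemma end_mem_pathVertices {φ : FreeGroup X →* G} (L : Word X) (c : Q) :
    φ (FreeGroup.mk L) • c ∈ pathVertices φ L c :=
  ⟨L, List.suffix_rfl, rfl⟩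

lemma start_mem_pathVertices {φ : FreeGroup X →* G} (L : Word X) (c : Q) :
    c ∈ pathVertices φ L c :=
  ⟨[], List.nil_suffix, by rw [← FreeGroup.one_eq_mk, map_one, one_smul]⟩

lemma cutAction_of_subset {φ : FreeGroup X →* G} {S : Set Q} (L : Word X) (c : Q) (h : G)
    (hS : pathVertices φ L c ⊆ S) :
    cutAction φ S (FreeGroup.mk L) (c, h) =
      (φ (FreeGroup.mk L) • c, φ (FreeGroup.mk L) * h) := by
  induction L with
  | nil => rw [← FreeGroup.one_eq_mk]; simp
  | cons a L ih =>
    have ih := ih ((pathVertices_cons_subset a L c).trans hS)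
    have h1 := hS (pathVertices_cons_subset a L c (end_mem_pathVertices L c))
    have h2 := hS (end_mem_pathVertices (a :: L) c)
    rcases a with ⟨x, _ | _⟩
    · rw [mk_cons_false] at h2 ⊢
      rw [map_mul, map_inv, mul_smul] at h2
      rw [map_mul, map_inv, Equiv.Perm.mul_apply, ih, cutAction_of, Equiv.Perm.inv_def]
      simp [cutPerm, h2, mul_smul, mul_assoc]
    · rw [mk_cons_true, map_mul, Equiv.Perm.mul_apply, ih, cutAction_of]
      simp [cutPerm, h1, mul_smul, mul_assoc]

lemma cutAction_of_disjoint {φ : FreeGroup X →* G} {S : Set Q} (L : Word X) (c : Q) (h : G)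
    (hS : Disjoint (pathVertices φ L c) S) :
    cutAction φ S (FreeGroup.mk L) (c, h) = (φ (FreeGroup.mk L) • c, h) := by
  rw [Set.disjoint_left] at hS
  induction L with
  | nil => rw [← FreeGroup.one_eq_mk]; simp
  | cons a L ih =>
    have ih := ih (fun d hd => hS (pathVertices_cons_subset a L c hd))
    have h1 := hS (pathVertices_cons_subset a L c (end_mem_pathVertices L c))
    have h2 := hS (end_mem_pathVertices (a :: L) c)
    rcases a with ⟨x, _ | _⟩
    · rw [mk_cons_false] at h2 ⊢
      rw [map_mul, map_inv, mul_smul] at h2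
      rw [map_mul, map_inv, Equiv.Perm.mul_apply, ih, cutAction_of, Equiv.Perm.inv_def]
      simp [cutPerm, h2, mul_smul]
    · rw [mk_cons_true, map_mul, Equiv.Perm.mul_apply, ih, cutAction_of]
      simp [cutPerm, h1, mul_smul]

lemma cutAction_fst (φ : FreeGroup X →* G) (S : Set Q) (g : FreeGroup X) (q : Q × G) :
    (cutAction φ S g q).1 = φ g • q.1 := by
  induction g using FreeGroup.induction_on generalizing q with
  | C1 => simp
  | of x => rw [cutAction_of]; rfl
  | inv_of x _ => rw [map_inv, map_inv, cutAction_of]; rfl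
  | mul x y hx hy => rw [map_mul, Equiv.Perm.mul_apply, hx, hy, map_mul, mul_smul]

/-- If `b` acts trivially on the fibre over `w⁻¹ c`, then `w b w⁻¹` acts trivially on the fibre
over `c`. -/
lemma cutAction_conj_fix {φ : FreeGroup X →* G} {S : Set Q} {w b : FreeGroup X} {c : Q}
    (hb : ∀ h : G, cutAction φ S b ((φ w)⁻¹ • c, h) = ((φ w)⁻¹ • c, h)) (h : G) :
    cutAction φ S (w * b * w⁻¹) (c, h) = (c, h) := by
  have h1 : cutAction φ S w⁻¹ (c, h) = ((φ w)⁻¹ • c, (cutAction φ S w⁻¹ (c, h)).2) := by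
    refine Prod.ext ?_ rfl
    rw [cutAction_fst, map_inv]
  rw [map_mul, map_mul, Equiv.Perm.mul_apply, Equiv.Perm.mul_apply, h1, hb, ← h1, map_inv]
  simp

/-- If `S` contains the loop of `v`, is disjoint from the loop of `u`, and contains or is disjoint
from each relator loop, then `v` is trivial. -/
lemma eq_one_of_separated {φ : FreeGroup X →* G} {S : Set Q} {c : Q} {k : ℕ}
    {u v : Word X} {γ : FreeGroup X} {w : Fin k → FreeGroup X} {ρ : Fin k → Word X}
    (hρ : ∀ i, φ (FreeGroup.mk (ρ i)) = 1)
    (heq : γ * FreeGroup.mk u * γ⁻¹ * (FreeGroup.mk v)⁻¹ =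
      (List.ofFn (fun i => w i * FreeGroup.mk (ρ i) * (w i)⁻¹)).prod)
    (hu : φ (FreeGroup.mk u) • (φ γ)⁻¹ • c = (φ γ)⁻¹ • c)
    (huS : Disjoint (pathVertices φ u ((φ γ)⁻¹ • c)) S)
    (hvS : pathVertices φ v c ⊆ S)
    (hρS : ∀ i, pathVertices φ (ρ i) ((φ (w i))⁻¹ • c) ⊆ S ∨
      Disjoint (pathVertices φ (ρ i) ((φ (w i))⁻¹ • c)) S) :
    φ (FreeGroup.mk v) = 1 := by
  have hprod : ∀ l : List (FreeGroup X),
      (∀ y ∈ l, ∀ h : G, cutAction φ S y (c, h) = (c, h)) →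
      ∀ h : G, cutAction φ S l.prod (c, h) = (c, h) := by
    intro l hl h
    induction l with
    | nil => simp
    | cons a l ih =>
      rw [List.prod_cons, map_mul, Equiv.Perm.mul_apply,
        ih (fun y hy => hl y (List.mem_cons_of_mem _ hy)), hl a List.mem_cons_self]
  have hR := hprod (List.ofFn (fun i => w i * FreeGroup.mk (ρ i) * (w i)⁻¹)) (by
    intro y hy h
    obtain ⟨i, rfl⟩ := (List.mem_ofFn' _ _).1 hy
    refine cutAction_conj_fix (fun h => ?_) h
    rcases hρS i with hS | hS
    · rw [cutAction_of_subset _ _ _ hS, hρ, one_smul, one_mul]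
    · rw [cutAction_of_disjoint _ _ _ hS, hρ, one_smul])
  have hL := cutAction_conj_fix (φ := φ) (S := S) (w := γ) (b := FreeGroup.mk u) (c := c)
    (fun h => by rw [cutAction_of_disjoint _ _ _ huS, hu]) 1
  rw [mul_inv_eq_iff_eq_mul] at heq
  rw [heq, map_mul, Equiv.Perm.mul_apply, cutAction_of_subset _ _ _ hvS] at hL
  have hc : φ (FreeGroup.mk v) • c = c := by
    have h1 := congrArg Prod.fst hL
    rwa [cutAction_fst, show φ (List.ofFn
      (fun i => w i * FreeGroup.mk (ρ i) * (w i)⁻¹)).prod = 1 by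
        rw [map_list_prod]
        refine List.prod_eq_one fun y hy => ?_
        obtain ⟨z, hz, rfl⟩ := List.mem_map.1 hy
        obtain ⟨i, rfl⟩ := (List.mem_ofFn' _ _).1 hz
        simp [hρ], one_smul] at h1
  rw [hc, hR] at hL
  simpa using congrArg Prod.snd hL

/-! ### Saturating the loop of `v` -/

/-- The set `S` consists of the vertices of the loop of `v` at `c` and of a largest collection `T`
of relator loops whose vertices are all within `|v|/2 + M·|T|` of `c`. -/
lemma exists_saturated {φ : FreeGroup X →* G} {c : Q} {k M : ℕ} {v : Word X}
    {ρ : Fin k → Word X} {e : Fin k → Q}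
    (hv : φ (FreeGroup.mk v) • c = c) (hρ : ∀ i, φ (FreeGroup.mk (ρ i)) = 1)
    (hM : ∀ i, (ρ i).length ≤ M) :
    ∃ S : Set Q, pathVertices φ v c ⊆ S ∧
      (∀ i, pathVertices φ (ρ i) (e i) ⊆ S ∨ Disjoint (pathVertices φ (ρ i) (e i)) S) ∧
      ∀ d ∈ S, Reach φ (v.length / 2 + M * k) c d := by
  classical
  let Good : Finset (Fin k) → Prop := fun T =>
    ∀ i ∈ T, ∀ d ∈ pathVertices φ (ρ i) (e i), Reach φ (v.length / 2 + M * T.card) c d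
  obtain ⟨T, hT, hmax⟩ := Finset.exists_max_image (Finset.univ.filter Good) Finset.card
    ⟨∅, by simp [Good]⟩
  have hT : Good T := by simpa using hT
  let S : Set Q := pathVertices φ v c ∪ ⋃ i ∈ T, pathVertices φ (ρ i) (e i)
  have hS : ∀ d ∈ S, Reach φ (v.length / 2 + M * T.card) c d := by
    rintro d (hd | hd)
    · exact (reach_of_mem_loop hv hd).mono (Nat.le_add_right _ _)
    · simp only [Set.mem_iUnion] at hd
      obtain ⟨i, hi, hd⟩ := hd
      exact hT i hi d hd
  refine ⟨S, Set.subset_union_left, fun i => ?_, fun d hd => (hS d hd).mono ?_⟩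
  · by_cases hi : i ∈ T
    · left
      intro d hd
      right
      simp only [Set.mem_iUnion]
      exact ⟨i, hi, hd⟩
    · right
      rw [Set.disjoint_left]
      intro d hd hdS
      have hcard : (insert i T).card = T.card + 1 := Finset.card_insert_of_notMem hi
      -- A loop outside `T` that meets `S` at `d` could be added to `T`.
      have hgood : Good (insert i T) := by
        intro j hj d' hd'
        rw [hcard]
        rcases Finset.mem_insert.1 hj with rfl | hj
        · have hl : φ (FreeGroup.mk (ρ j)) • e j = e j := by rw [hρ, one_smul]
          refine ((hS d hdS).trans ((reach_of_mem_loop hl hd).symm.trans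
            (reach_of_mem_loop hl hd'))).mono ?_
          have := hM j
          rw [Nat.mul_succ]
          omega
        · exact (hT j hj d' hd').mono (by rw [Nat.mul_succ]; omega)
      have := hmax (insert i T) (by simpa using hgood)
      omega
  · have : T.card ≤ k := by simpa using T.card_le_univ
    gcongr

end Schreier

/-! ### From annular area to short conjugators -/

lemma exists_short_conjugator {X G : Type*} [Group G] {φ : FreeGroup X →* G} {k M : ℕ}
    {u v : Word X} {γ : FreeGroup X} {w : Fin k → FreeGroup X} {ρ : Fin k → Word X}
    (hρ : ∀ i, φ (FreeGroup.mk (ρ i)) = 1) (hM : ∀ i, (ρ i).length ≤ M)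
    (hγ : φ γ * φ (FreeGroup.mk u) * (φ γ)⁻¹ = φ (FreeGroup.mk v))
    (heq : γ * FreeGroup.mk u * γ⁻¹ * (FreeGroup.mk v)⁻¹ =
      (List.ofFn (fun i => w i * FreeGroup.mk (ρ i) * (w i)⁻¹)).prod) :
    ∃ p : Word X, p.length ≤ (u.length + v.length) / 2 + M * k ∧
      φ (FreeGroup.mk p) * φ (FreeGroup.mk u) * (φ (FreeGroup.mk p))⁻¹ = φ (FreeGroup.mk v) := by
  set g := φ (FreeGroup.mk v) with hg
  let c : G ⧸ Subgroup.zpowers g := ((1 : G) : G ⧸ Subgroup.zpowers g)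
  have hvc : φ (FreeGroup.mk v) • c = c := by
    rw [← hg]
    change ((g * 1 : G) : G ⧸ Subgroup.zpowers g) = ((1 : G) : G ⧸ Subgroup.zpowers g)
    rw [QuotientGroup.eq]
    simp
  have huc : φ (FreeGroup.mk u) • (φ γ)⁻¹ • c = (φ γ)⁻¹ • c := by
    have h1 : φ (FreeGroup.mk u) * (φ γ)⁻¹ = (φ γ)⁻¹ * g := by rw [← hγ]; group
    rw [← mul_smul, h1, mul_smul, hvc]
  obtain ⟨S, hvS, hρS, hS⟩ := exists_saturated (e := fun i => (φ (w i))⁻¹ • c) hvc hρ hM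
  by_cases huS : Disjoint (pathVertices φ u ((φ γ)⁻¹ • c)) S
  · have h1 : g = 1 := eq_one_of_separated hρ heq huc huS hvS hρS
    refine ⟨[], by simp, ?_⟩
    rw [h1] at hγ ⊢
    rw [← FreeGroup.one_eq_mk, map_one]
    simpa [mul_inv_eq_one] using hγ
  · obtain ⟨d, hdu, hdS⟩ := Set.not_disjoint_iff.1 huS
    obtain ⟨p, hp, hpc⟩ := (reach_of_mem_loop huc hdu).trans (hS d hdS).symm
    refine ⟨p, by omega, ?_⟩
    -- The word `p` labels a path from `γ⁻¹H` back to `H`, so `p γ⁻¹` lies in `H = ⟨g⟩`.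
    have hmem : φ (FreeGroup.mk p) * (φ γ)⁻¹ ∈ Subgroup.zpowers g := by
      rw [← mul_smul] at hpc
      have h2 : (((φ (FreeGroup.mk p) * (φ γ)⁻¹) * 1 : G) : G ⧸ Subgroup.zpowers g) =
        ((1 : G) : G ⧸ Subgroup.zpowers g) := hpc
      rw [QuotientGroup.eq] at h2
      simpa using inv_mem h2
    obtain ⟨m, hm⟩ := Subgroup.mem_zpowers_iff.1 hmem
    have h3 : φ (FreeGroup.mk p) = g ^ m * φ γ := by rw [hm]; group
    calc φ (FreeGroup.mk p) * φ (FreeGroup.mk u) * (φ (FreeGroup.mk p))⁻¹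
        = g ^ m * (φ γ * φ (FreeGroup.mk u) * (φ γ)⁻¹) * (g ^ m)⁻¹ := by rw [h3]; group
      _ = g := by rw [hγ]; group

/-! ### Attainment of the extrema in the definitions -/

lemma exists_isProdOfConjRels {X : Type*} {R : Set (FreeGroup X)} {g : FreeGroup X}
    (hg : proj R g = 1) : ∃ k, IsProdOfConjRels R k g := by
  have hmem : g ∈ Subgroup.normalClosure R := (PresentedGroup.mk_eq_one_iff).1 hg
  rw [Subgroup.normalClosure, ← Subgroup.mem_toSubmonoid, Subgroup.closure_toSubmonoid] at hmem
  obtain ⟨l, hl, rfl⟩ := Submonoid.exists_list_of_mem_closure hmem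
  have key : ∀ i : Fin l.length, ∃ w r : FreeGroup X, ∃ ε : ℤ, r ∈ R ∧ (ε = 1 ∨ ε = -1) ∧
      l.get i = w * r ^ ε * w⁻¹ := by
    intro i
    rcases hl (l.get i) (List.get_mem l i) with h | h
    · obtain ⟨r, hr, hc⟩ := Group.mem_conjugatesOfSet_iff.1 h
      obtain ⟨w, hw⟩ := isConj_iff.1 hc
      exact ⟨w, r, 1, hr, Or.inl rfl, by rw [← hw, zpow_one]⟩
    · obtain ⟨r, hr, hc⟩ := Group.mem_conjugatesOfSet_iff.1 h
      obtain ⟨w, hw⟩ := isConj_iff.1 hc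
      refine ⟨w, r, -1, hr, Or.inr rfl, ?_⟩
      rw [← inv_inv (l.get i), ← hw]
      group
  choose w r ε hr hε h using key
  refine ⟨l.length, w, r, ε, hr, hε, ?_⟩
  simp only [← h]
  rw [List.ofFn_get]

/-- The set whose supremum defines `ann R n` is finite, so that supremum is not a junk value. -/
lemma annPair_le_ann {X : Type*} [Finite X] {R : Set (FreeGroup X)} {n : ℕ} {u v : Word X}
    (hn : u.length + v.length ≤ n)
    (hc : IsConj (proj R (FreeGroup.mk u)) (proj R (FreeGroup.mk v))) :
    annPair R (FreeGroup.mk u) (FreeGroup.mk v) ≤ ann R n := by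
  refine le_csSup (Set.Finite.bddAbove ?_) ⟨u, v, hn, hc, rfl⟩
  have hfin : {w : Word X | w.length ≤ n}.Finite := List.finite_length_le _ n
  refine ((hfin.prod hfin).image
    (fun q => annPair R (FreeGroup.mk q.1) (FreeGroup.mk q.2))).subset ?_
  rintro A ⟨u', v', hn', -, rfl⟩
  refine ⟨(u', v'), ⟨?_, ?_⟩, rfl⟩ <;> simp only [Set.mem_ofPred_eq] <;> omega

/-- **Brick–Corson inequalities, part (2).** For any finitely presented group
`G = ⟨X ∣ R⟩`, if `M > 0` is the length of the longest defining relation, then for all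
`n`, `CL(n) ≤ n/2 + M·Ann(n)`. -/
theorem brick_corson_cl_le {X : Type*} [Finite X] [DecidableEq X]
    (R : Set (FreeGroup X)) (hR : R.Finite)
    (M : ℕ) (hMpos : 0 < M)
    (hMub : ∀ r ∈ R, (FreeGroup.toWord r).length ≤ M)
    (hMmem : ∃ r ∈ R, (FreeGroup.toWord r).length = M)
    (n : ℕ) :
    (CL R n : ℝ) ≤ (n : ℝ) / 2 + (M : ℝ) * (ann R n : ℝ) := by
  have hle : CL R n ≤ n / 2 + M * ann R n := by
    refine Nat.sInf_le ?_
    intro u v hn hc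
    have hne : {A | ∃ γ : FreeGroup X,
        proj R (γ * FreeGroup.mk u * γ⁻¹) = proj R (FreeGroup.mk v) ∧
        A = area R (γ * FreeGroup.mk u * γ⁻¹ * (FreeGroup.mk v)⁻¹)}.Nonempty := by
      obtain ⟨a, ha⟩ := isConj_iff.1 hc
      obtain ⟨γ, rfl⟩ := PresentedGroup.mk_surjective R a
      exact ⟨_, γ, by rw [map_mul, map_mul, map_inv]; exact ha, rfl⟩
    obtain ⟨γ, hγ, hA⟩ := Nat.sInf_mem hne
    have hprod : IsProdOfConjRels R (annPair R (FreeGroup.mk u) (FreeGroup.mk v))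
        (γ * FreeGroup.mk u * γ⁻¹ * (FreeGroup.mk v)⁻¹) := by
      rw [annPair, hA]
      exact Nat.sInf_mem (s := {k | IsProdOfConjRels R k _})
        (exists_isProdOfConjRels (by rw [map_mul, map_inv, hγ, mul_inv_cancel]))
    obtain ⟨w, r, ε, hr, hε, heq⟩ := hprod
    have hρ : ∀ i, proj R (FreeGroup.mk (FreeGroup.toWord (r i ^ ε i))) = 1 := by
      intro i
      rw [FreeGroup.mk_toWord, map_zpow]
      have : proj R (r i) = 1 :=
        PresentedGroup.mk_eq_one_iff.2 (Subgroup.subset_normalClosure (hr i))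
      rw [this, one_zpow]
    have hM : ∀ i, (FreeGroup.toWord (r i ^ ε i)).length ≤ M := by
      intro i
      rcases hε i with h | h <;> rw [h]
      · simpa using hMub _ (hr i)
      · simpa [FreeGroup.toWord_inv] using hMub _ (hr i)
    obtain ⟨p, hp, hpc⟩ := exists_short_conjugator (φ := proj R) (γ := γ) (w := w) hρ hM
      (by simpa only [map_mul, map_inv] using hγ)
      (by simpa only [FreeGroup.mk_toWord] using heq)
    refine ⟨p, hp.trans ?_, hpc⟩
    have := Nat.mul_le_mul_left M (annPair_le_ann hn hc)
    omega
  calc (CL R n : ℝ) ≤ ((n / 2 + M * ann R n : ℕ) : ℝ) := by exact_mod_cast hle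
    _ ≤ (n : ℝ) / 2 + (M : ℝ) * (ann R n : ℝ) := by
      push_cast
      gcongr
      exact Nat.cast_div_le

end AnnDehn
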